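/- Theorem 2.2 (Rate separation for absorbing diffusion). Suppose the noise-schedule assumption holds at every σ ∈ (0,1). Fix x ∈ X̄ compatible with D, a coordinate h with x^h = m, a clean token a ∈ Fin K, and set z = x^{h→a} and ρ = p_data(proj_D(z))/p_data(proj_D(x)). For each σ ∈ (0,1), with t = t_σ(T), the limit L(σ) := lim_{T→∞} q̄^h_{t−1|t}(a | x)/β^{(T)}_t exists. Moreover: (i) if d(z,D) < d(x,D) (support-improving unmasking) then there exist C > 0 and σ₀ ∈ (0,1) such that |L(σ) − σ^{−1}·ρ| ≤ C for all σ ∈ (0,σ₀); (ii) if d(z,D) = d(x,D) (non-improving) then L(σ) = 0 for every σ ∈ (0,1). -/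

import Mathlib

open scoped Classical
open Filter

/-- Absorbing-corrupted marginal `q̄_σ(x)`, mask = `none : Option (Fin K)`. -/
noncomputable def qAbs (K H : ℕ) (p : (Fin H → Fin K) → ℝ) (σ : ℝ)
    (x : Fin H → Option (Fin K)) : ℝ :=
  ∑ x0 : Fin H → Fin K, p x0 *
    ∏ i : Fin H, ((1 - σ) * (if x i = some (x0 i) then (1 : ℝ) else 0)
      + σ * (if x i = none then (1 : ℝ) else 0))

/-- `x ∈ X̄` is compatible with `D = supp p`. -/
def CompatAbs (K H : ℕ) (p : (Fin H → Fin K) → ℝ)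
    (x : Fin H → Option (Fin K)) : Prop :=
  ∃ x0 : Fin H → Fin K, p x0 ≠ 0 ∧ ∀ i : Fin H, x i ≠ none → x i = some (x0 i)

/-- Hamming distance from `x ∈ X̄` to the (embedded) support `D` of `p`. -/
noncomputable def distSuppAbs (K H : ℕ) (p : (Fin H → Fin K) → ℝ)
    (x : Fin H → Option (Fin K)) : ℕ :=
  sInf {n : ℕ | ∃ z : Fin H → Fin K, p z ≠ 0 ∧
    hammingDist x (fun i => (some (z i) : Option (Fin K))) = n}

/-- Total `p`-mass of the nearest in-support strings to `x ∈ X̄`. -/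
noncomputable def projMassAbs (K H : ℕ) (p : (Fin H → Fin K) → ℝ)
    (x : Fin H → Option (Fin K)) : ℝ :=
  ∑ z ∈ Finset.univ.filter
      (fun z : Fin H → Fin K => p z ≠ 0 ∧
        hammingDist x (fun i => (some (z i) : Option (Fin K))) = distSuppAbs K H p x), p z

/-- Cumulative noise level `σ^{(T)}_t = 1 − ∏_{s=1}^t (1 − β^{(T)}_s)`. -/
noncomputable def cumNoise (β : ℕ → ℕ → ℝ) (T t : ℕ) : ℝ :=
  1 - ∏ s ∈ Finset.Icc 1 t, (1 - β T s)

/-- One-step absorbing forward kernel with per-step rate `b`. -/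
noncomputable def stepAbs (K H : ℕ) (b : ℝ) (y' y : Fin H → Option (Fin K)) : ℝ :=
  ∏ i : Fin H, ((1 - b) * (if y' i = y i then (1 : ℝ) else 0)
    + b * (if y' i = none then (1 : ℝ) else 0))

/-- Exact single-token absorbing reverse probability `q̄^h_{t−1|t}(a|x)`. -/
noncomputable def revAbs (K H : ℕ) (p : (Fin H → Fin K) → ℝ) (β : ℕ → ℕ → ℝ)
    (T t : ℕ) (h : Fin H) (a : Fin K) (x : Fin H → Option (Fin K)) : ℝ :=
  (∑ y ∈ Finset.univ.filter (fun y : Fin H → Option (Fin K) => y h = some a),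
      qAbs K H p (cumNoise β T (t - 1)) y * stepAbs K H (β T t) x y)
    / qAbs K H p (cumNoise β T t) x

/-!
A state `y` of the previous step with `y h = a` can reach `x` only if the mask at `h` was created in
the last step, while the other coordinates follow the forward kernel, which composes as a semigroup.
Hence the reverse probability divided by `β` is `(1 - β)⁻¹ * q̄(z) / q̄(x)` with `z = x^{h→a}`, and
letting `β → 0` gives `L(σ) = q̄_σ(z) / q̄_σ(x)`. A compatible state has
`q̄_σ(x) = σ ^ #masks * (1 - σ) ^ #tokens * p(proj_D(x))`, an incompatible one has
`q̄_σ(x) = 0`, and unmasking improves the support exactly when `z` is still compatible. So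
`L(σ) = σ⁻¹ρ - ρ` in the improving case and `L(σ) = 0` otherwise.
-/

section MaskedStrings

variable {ι α : Type*}

/-- The clean string `w` is a completion of the partially masked string `x`: it agrees with `x` at
every unmasked coordinate. -/
def IsCompletion (x : ι → Option α) (w : ι → α) : Prop :=
  ∀ i, x i ≠ none → x i = some (w i)

variable [Fintype ι]

/-- The number of masked coordinates of `x`, where `none` encodes the mask. -/
def maskCount (x : ι → Option α) : ℕ :=
  Finset.card {i | x i = none}

theorem maskCount_update_add_one [DecidableEq ι] {x : ι → Option α} {h : ι} (hm : x h = none)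
    (a : α) : maskCount (Function.update x h (some a)) + 1 = maskCount x := by
  unfold maskCount
  rw [← Finset.card_insert_of_notMem (a := h) (by simp)]
  congr 1
  ext i
  obtain rfl | hi := eq_or_ne i h <;> simp [*]

theorem masked_subset_ne [DecidableEq α] (x : ι → Option α) (w : ι → α) :
    ({i | x i = none} : Finset ι) ⊆ ({i | x i ≠ some (w i)} : Finset ι) :=
  Finset.monotone_filter_right _ fun i _ (hi : x i = none) => by simp [hi]

theorem maskCount_le_hammingDist [DecidableEq α] (x : ι → Option α) (w : ι → α) :
    maskCount x ≤ hammingDist x fun i => some (w i) :=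
  Finset.card_le_card (masked_subset_ne x w)

theorem hammingDist_eq_maskCount_iff [DecidableEq α] {x : ι → Option α} {w : ι → α} :
    (hammingDist x fun i => some (w i)) = maskCount x ↔ IsCompletion x w := by
  calc
    _ ↔ ({i | x i = none} : Finset ι) = ({i | x i ≠ some (w i)} : Finset ι) :=
      ⟨fun hc => Finset.eq_of_subset_of_card_le (masked_subset_ne x w) hc.le,
        fun hs => (congrArg Finset.card hs).symm⟩
    _ ↔ IsCompletion x w := by
      simp only [Finset.ext_iff, Finset.mem_filter, Finset.mem_univ, true_and, IsCompletion]
      refine forall_congr' fun i => ?_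
      cases x i <;> simp

/-- The probability that noise level `σ` turns any given completion of `x` into `x`. -/
def maskWeight (σ : ℝ) (x : ι → Option α) : ℝ :=
  ∏ i, if x i = none then σ else 1 - σ

theorem maskWeight_pos {σ : ℝ} (hσ : σ ∈ Set.Ioo (0 : ℝ) 1) (x : ι → Option α) :
    0 < maskWeight σ x :=
  Finset.prod_pos fun i _ => by
    split_ifs
    exacts [hσ.1, sub_pos.2 hσ.2]

theorem mul_maskWeight_update [DecidableEq ι] (σ : ℝ) {x : ι → Option α} {h : ι}
    (hm : x h = none) (a : α) :
    σ * maskWeight σ (Function.update x h (some a)) = (1 - σ) * maskWeight σ x := by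
  have hrest : ∀ i ∈ Finset.univ.erase h,
      (if Function.update x h (some a) i = none then σ else 1 - σ) =
        if x i = none then σ else 1 - σ := fun i hi => by
    rw [Function.update_of_ne (Finset.ne_of_mem_erase hi)]
  simp only [maskWeight]
  rw [← Finset.mul_prod_erase _ _ (Finset.mem_univ h), Finset.prod_congr rfl hrest,
    ← Finset.mul_prod_erase _ _ (Finset.mem_univ h)]
  simp only [Function.update_self, hm, reduceCtorEq, if_true, if_false]
  ring

end MaskedStrings

section AbsorbingKernel

variable {ι α : Type*} [DecidableEq α]

/-- The one-coordinate absorbing kernel: the probability that noise level `σ` turns the token `u`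
into `v`. Both `qAbs` and `stepAbs` are built from products of it over the coordinates. -/
def absorbKernel (σ : ℝ) (u v : Option α) : ℝ :=
  (1 - σ) * (if v = u then 1 else 0) + σ * (if v = none then 1 else 0)

theorem sum_absorbKernel_mul_absorbKernel [Fintype α] {r b s : ℝ}
    (hs : 1 - s = (1 - r) * (1 - b)) (w : α) (v : Option α) :
    ∑ c, absorbKernel r (some w) c * absorbKernel b c v = absorbKernel s (some w) v := by
  obtain rfl : s = 1 - (1 - r) * (1 - b) := by linarith
  rw [Fintype.sum_option]
  cases v with
  | none =>
    simp only [absorbKernel, reduceCtorEq, ↓reduceIte, mul_zero, mul_one, zero_add, sub_add_cancel,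
      Option.some.injEq, mul_ite, add_zero, ite_mul, zero_mul, Finset.sum_ite_eq', Finset.mem_univ,
      sub_sub_cancel]
    ring
  | some c => simp [absorbKernel]

theorem prod_absorbKernel_some [Fintype ι] (σ : ℝ) (x : ι → Option α) (w : ι → α) :
    ∏ i, absorbKernel σ (some (w i)) (x i) = if IsCompletion x w then maskWeight σ x else 0 := by
  have hcoord : ∀ i, absorbKernel σ (some (w i)) (x i) =
      if x i ≠ none → x i = some (w i) then (if x i = none then σ else 1 - σ) else 0 := fun i => by
    cases hxi : x i <;> simp [absorbKernel]
  simp only [hcoord, Fintype.prod_ite_zero, IsCompletion, maskWeight]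
  congr

end AbsorbingKernel

theorem sum_filter_apply_eq_prod {ι κ R : Type*} [Fintype ι] [DecidableEq ι] [Fintype κ]
    [DecidableEq κ] [CommSemiring R] (F : ι → κ → R) (h : ι) (a : κ) :
    ∑ y : ι → κ with y h = a, ∏ i, F i (y i) =
      F h a * ∏ i ∈ Finset.univ.erase h, ∑ c, F i c := by
  have hset : ({y | y h = a} : Finset (ι → κ)) =
      Fintype.piFinset (Function.update (fun _ => (Finset.univ : Finset κ)) h {a}) := by
    simp [Fintype.piFinset_update_singleton_eq_filter_piFinset_eq]
  have hrest : ∀ i ∈ Finset.univ.erase h,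
      ∑ c ∈ Function.update (fun _ => (Finset.univ : Finset κ)) h {a} i, F i c = ∑ c, F i c := by
    intro i hi
    rw [Function.update_of_ne (Finset.ne_of_mem_erase hi)]
  rw [hset, ← Finset.prod_univ_sum, ← Finset.mul_prod_erase _ _ (Finset.mem_univ h),
    Finset.prod_congr rfl hrest, Function.update_self, Finset.sum_singleton]

section Support

variable {K H : ℕ} {p : (Fin H → Fin K) → ℝ} {x : Fin H → Option (Fin K)}

theorem CompatAbs.exists_ne_zero (hx : CompatAbs K H p x) : ∃ w, p w ≠ 0 :=
  hx.imp fun _ hw => hw.1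

theorem exists_hammingDist_eq_distSuppAbs (hp : ∃ w, p w ≠ 0) (x : Fin H → Option (Fin K)) :
    ∃ w, p w ≠ 0 ∧ (hammingDist x fun i => some (w i)) = distSuppAbs K H p x :=
  let ⟨w, hw⟩ := hp
  Nat.sInf_mem (s := {n | ∃ z, p z ≠ 0 ∧ (hammingDist x fun i => some (z i)) = n})
    ⟨_, w, hw, rfl⟩

theorem CompatAbs.distSuppAbs_eq (hx : CompatAbs K H p x) :
    distSuppAbs K H p x = maskCount x := by
  obtain ⟨z, -, hz⟩ := exists_hammingDist_eq_distSuppAbs hx.exists_ne_zero x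
  obtain ⟨w, hw, hxw⟩ := hx
  exact le_antisymm (Nat.sInf_le ⟨w, hw, hammingDist_eq_maskCount_iff.2 hxw⟩)
    (hz ▸ maskCount_le_hammingDist x z)

theorem compatAbs_of_distSuppAbs_le (hp : ∃ w, p w ≠ 0)
    (hle : distSuppAbs K H p x ≤ maskCount x) : CompatAbs K H p x := by
  obtain ⟨w, hw, hdist⟩ := exists_hammingDist_eq_distSuppAbs hp x
  exact ⟨w, hw, hammingDist_eq_maskCount_iff.1 <|
    (hdist.trans_le hle).antisymm (maskCount_le_hammingDist x w)⟩

theorem CompatAbs.update_iff (hx : CompatAbs K H p x) {h : Fin H} (hm : x h = none) (a : Fin K) :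
    CompatAbs K H p (Function.update x h (some a)) ↔
      distSuppAbs K H p (Function.update x h (some a)) < distSuppAbs K H p x := by
  rw [hx.distSuppAbs_eq, ← maskCount_update_add_one hm a, Nat.lt_succ_iff]
  exact ⟨fun hz => hz.distSuppAbs_eq.le, compatAbs_of_distSuppAbs_le hx.exists_ne_zero⟩

theorem CompatAbs.projMassAbs_eq_sum (hx : CompatAbs K H p x) :
    projMassAbs K H p x = ∑ w with IsCompletion x w, p w := by
  simp only [projMassAbs, hx.distSuppAbs_eq, hammingDist_eq_maskCount_iff]
  rw [← Finset.filter_filter, Finset.filter_comm, Finset.sum_filter_ne_zero]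

theorem projMassAbs_pos (hp0 : ∀ v, 0 ≤ p v) (hp : ∃ w, p w ≠ 0) (x : Fin H → Option (Fin K)) :
    0 < projMassAbs K H p x := by
  obtain ⟨w, hw⟩ := exists_hammingDist_eq_distSuppAbs hp x
  exact Finset.sum_pos' (fun v _ => hp0 v)
    ⟨w, Finset.mem_filter.2 ⟨Finset.mem_univ w, hw⟩, (hp0 w).lt_of_ne' hw.1⟩

end Support

section Marginal

variable {K H : ℕ} {p : (Fin H → Fin K) → ℝ} {x : Fin H → Option (Fin K)}

theorem qAbs_eq_maskWeight_mul_sum (p : (Fin H → Fin K) → ℝ) (σ : ℝ)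
    (x : Fin H → Option (Fin K)) :
    qAbs K H p σ x = maskWeight σ x * ∑ w with IsCompletion x w, p w := by
  change ∑ w, p w * ∏ i, absorbKernel σ (some (w i)) (x i) = _
  rw [Finset.sum_filter, mul_comm, Finset.sum_mul]
  simp only [prod_absorbKernel_some, mul_ite, ite_mul, mul_zero, zero_mul]

theorem CompatAbs.qAbs_eq (hx : CompatAbs K H p x) (σ : ℝ) :
    qAbs K H p σ x = maskWeight σ x * projMassAbs K H p x := by
  rw [qAbs_eq_maskWeight_mul_sum, hx.projMassAbs_eq_sum]

theorem CompatAbs.qAbs_pos (hp0 : ∀ v, 0 ≤ p v) (hx : CompatAbs K H p x) {σ : ℝ}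
    (hσ : σ ∈ Set.Ioo (0 : ℝ) 1) : 0 < qAbs K H p σ x :=
  hx.qAbs_eq σ ▸ mul_pos (maskWeight_pos hσ x) (projMassAbs_pos hp0 hx.exists_ne_zero x)

theorem qAbs_eq_zero_of_not_compatAbs (hx : ¬ CompatAbs K H p x) (σ : ℝ) :
    qAbs K H p σ x = 0 := by
  have hmass : ∑ w with IsCompletion x w, p w = 0 := Finset.sum_eq_zero fun w hw =>
    not_not.1 fun hpw => hx ⟨w, hpw, (Finset.mem_filter.1 hw).2⟩
  rw [qAbs_eq_maskWeight_mul_sum, hmass, mul_zero]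

theorem continuous_qAbs (p : (Fin H → Fin K) → ℝ) (x : Fin H → Option (Fin K)) :
    Continuous fun σ => qAbs K H p σ x := by
  unfold qAbs
  fun_prop

theorem qAbs_update_div_qAbs (hx : CompatAbs K H p x) {h : Fin H} (hm : x h = none) {a : Fin K}
    (hz : CompatAbs K H p (Function.update x h (some a))) {σ : ℝ} (hσ : σ ∈ Set.Ioo (0 : ℝ) 1) :
    qAbs K H p σ (Function.update x h (some a)) / qAbs K H p σ x =
      σ⁻¹ * (projMassAbs K H p (Function.update x h (some a)) / projMassAbs K H p x) -
        projMassAbs K H p (Function.update x h (some a)) / projMassAbs K H p x := by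
  have hratio : maskWeight σ (Function.update x h (some a)) / maskWeight σ x = σ⁻¹ - 1 := by
    have hσ0 : σ ≠ 0 := hσ.1.ne'
    rw [div_eq_iff (maskWeight_pos hσ x).ne', ← mul_right_inj' hσ0, mul_maskWeight_update σ hm a]
    field_simp
  rw [hz.qAbs_eq, hx.qAbs_eq, mul_div_mul_comm, hratio, sub_mul, one_mul]

end Marginal

section ReverseKernel

variable {K H : ℕ} {x : Fin H → Option (Fin K)} {h : Fin H}

theorem one_sub_mul_sum_qAbs_mul_stepAbs (p : (Fin H → Fin K) → ℝ) {r b s : ℝ}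
    (hs : 1 - s = (1 - r) * (1 - b)) (hm : x h = none) (a : Fin K) :
    (1 - b) * ∑ y with y h = some a, qAbs K H p r y * stepAbs K H b x y =
      b * qAbs K H p s (Function.update x h (some a)) := by
  have hjoint : ∀ y, qAbs K H p r y * stepAbs K H b x y = ∑ w, p w *
      ∏ i, absorbKernel r (some (w i)) (y i) * absorbKernel b (y i) (x i) := fun y => by
    simp only [Finset.prod_mul_distrib, ← mul_assoc, ← Finset.sum_mul]
    rfl
  have hmarginal : qAbs K H p s (Function.update x h (some a)) =
      ∑ w, p w * (absorbKernel s (some (w h)) (some a) *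
        ∏ i ∈ Finset.univ.erase h, absorbKernel s (some (w i)) (x i)) := by
    refine Finset.sum_congr rfl fun w _ => congrArg _ ?_
    rw [← Finset.mul_prod_erase _ _ (Finset.mem_univ h), Function.update_self]
    refine congrArg _ (Finset.prod_congr rfl fun i hi => ?_)
    rw [Function.update_of_ne (Finset.ne_of_mem_erase hi)]
    rfl
  have hflip : ∀ w : Fin K, (1 - b) * (absorbKernel r (some w) (some a) *
      absorbKernel b (some a) (x h)) = b * absorbKernel s (some w) (some a) := fun w => by
    simp only [absorbKernel, hm, hs, reduceCtorEq, if_true, if_false]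
    ring
  simp only [hjoint, hmarginal]
  rw [Finset.sum_comm, Finset.mul_sum, Finset.mul_sum]
  refine Finset.sum_congr rfl fun w _ => ?_
  rw [← Finset.mul_sum, sum_filter_apply_eq_prod
    (fun i c => absorbKernel r (some (w i)) c * absorbKernel b c (x i))]
  simp only [sum_absorbKernel_mul_absorbKernel hs]
  linear_combination
    p w * (∏ i ∈ Finset.univ.erase h, absorbKernel s (some (w i)) (x i)) * hflip (w h)

theorem one_sub_cumNoise (β : ℕ → ℕ → ℝ) (T : ℕ) {t : ℕ} (ht : t ≠ 0) :
    1 - cumNoise β T t = (1 - cumNoise β T (t - 1)) * (1 - β T t) := by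
  obtain ⟨n, rfl⟩ := Nat.exists_eq_succ_of_ne_zero ht
  simp only [cumNoise, sub_sub_cancel, Nat.succ_eq_add_one, Nat.add_sub_cancel]
  exact Finset.prod_Icc_succ_top (Nat.le_add_left 1 n) _

theorem revAbs_div (p : (Fin H → Fin K) → ℝ) {β : ℕ → ℕ → ℝ} {T t : ℕ} (ht : t ≠ 0)
    (hβ0 : β T t ≠ 0) (hβ1 : β T t ≠ 1) (hm : x h = none) (a : Fin K) :
    revAbs K H p β T t h a x / β T t = (1 - β T t)⁻¹ *
      (qAbs K H p (cumNoise β T t) (Function.update x h (some a)) /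
        qAbs K H p (cumNoise β T t) x) := by
  have hb : 1 - β T t ≠ 0 := sub_ne_zero.2 hβ1.symm
  have hsum := one_sub_mul_sum_qAbs_mul_stepAbs p (one_sub_cumNoise β T ht) hm a
  rw [revAbs, eq_div_of_mul_eq hb ((mul_comm _ _).trans hsum)]
  field_simp

theorem tendsto_revAbs_div {ι : Type*} {l : Filter ι} {p : (Fin H → Fin K) → ℝ}
    {β : ℕ → ℕ → ℝ} {T t : ι → ℕ} {σ : ℝ} (hσ : σ ≠ 0) (hq : qAbs K H p σ x ≠ 0)
    (hcum : Tendsto (fun i => cumNoise β (T i) (t i)) l (nhds σ))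
    (hβ : Tendsto (fun i => β (T i) (t i)) l (nhds 0)) (hβ0 : ∀ᶠ i in l, β (T i) (t i) ≠ 0)
    (hm : x h = none) (a : Fin K) :
    Tendsto (fun i => revAbs K H p β (T i) (t i) h a x / β (T i) (t i)) l
      (nhds (qAbs K H p σ (Function.update x h (some a)) / qAbs K H p σ x)) := by
  have hmarginal (y : Fin H → Option (Fin K)) :
      Tendsto (fun i => qAbs K H p (cumNoise β (T i) (t i)) y) l (nhds (qAbs K H p σ y)) :=
    ((continuous_qAbs p y).tendsto σ).comp hcum
  have hinv : Tendsto (fun i => (1 - β (T i) (t i))⁻¹) l (nhds 1) := by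
    simpa using (hβ.const_sub 1).inv₀ (by norm_num)
  have hlim := hinv.mul ((hmarginal (Function.update x h (some a))).div (hmarginal x) hq)
  rw [one_mul] at hlim
  refine hlim.congr' ?_
  filter_upwards [hβ0, hβ.eventually_ne zero_ne_one, hcum.eventually_ne hσ] with i h0 h1 hcum0
  have ht : t i ≠ 0 := fun ht => hcum0 (by simp [cumNoise, ht])
  exact (revAbs_div p ht h0 h1 hm a).symm

end ReverseKernel

theorem absorbing_rate_separation_general {K H : ℕ} {p : (Fin H → Fin K) → ℝ}
    (hp0 : ∀ v, 0 ≤ p v) {β : ℕ → ℕ → ℝ} {tsel : ℝ → ℕ → ℕ}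
    (hβ0 : ∀ σ ∈ Set.Ioo (0 : ℝ) 1, ∀ᶠ T in atTop, β T (tsel σ T) ≠ 0)
    (hsched : ∀ σ ∈ Set.Ioo (0 : ℝ) 1,
      Tendsto (fun T => cumNoise β T (tsel σ T)) atTop (nhds σ) ∧
      Tendsto (fun T => β T (tsel σ T)) atTop (nhds 0))
    {x : Fin H → Option (Fin K)} (hx : CompatAbs K H p x)
    {h : Fin H} (hm : x h = none) (a : Fin K) :
    ∃ L : ℝ → ℝ,
      (∀ σ ∈ Set.Ioo (0 : ℝ) 1,
        Tendsto (fun T => revAbs K H p β T (tsel σ T) h a x / β T (tsel σ T))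
          atTop (nhds (L σ))) ∧
      (distSuppAbs K H p (Function.update x h (some a)) < distSuppAbs K H p x →
        ∃ C > (0 : ℝ), ∃ σ₀ ∈ Set.Ioo (0 : ℝ) 1, ∀ σ ∈ Set.Ioo (0 : ℝ) σ₀,
          |L σ - σ⁻¹ *
              (projMassAbs K H p (Function.update x h (some a)) / projMassAbs K H p x)|
            ≤ C) ∧
      (distSuppAbs K H p (Function.update x h (some a)) = distSuppAbs K H p x →
        ∀ σ ∈ Set.Ioo (0 : ℝ) 1, L σ = 0) := by
  refine ⟨fun σ => qAbs K H p σ (Function.update x h (some a)) / qAbs K H p σ x,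
    fun σ hσ => ?_, fun himproving => ?_, fun heq σ _ => ?_⟩
  · exact tendsto_revAbs_div hσ.1.ne' (hx.qAbs_pos hp0 hσ).ne' (hsched σ hσ).1 (hsched σ hσ).2
      (hβ0 σ hσ) hm a
  · have hz := (hx.update_iff hm a).2 himproving
    have hρ : 0 < projMassAbs K H p (Function.update x h (some a)) / projMassAbs K H p x :=
      div_pos (projMassAbs_pos hp0 hz.exists_ne_zero _) (projMassAbs_pos hp0 hx.exists_ne_zero _)
    refine ⟨_, hρ, 1 / 2, by norm_num, fun σ hσ => ?_⟩
    have hσ' : σ ∈ Set.Ioo (0 : ℝ) 1 := ⟨hσ.1, hσ.2.trans one_half_lt_one⟩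
    simp only [qAbs_update_div_qAbs hx hm hz hσ', sub_sub_cancel_left, abs_neg, abs_of_pos hρ,
      le_refl]
  · have hz : ¬ CompatAbs K H p (Function.update x h (some a)) := fun hz =>
      ((hx.update_iff hm a).1 hz).ne heq
    simp only [qAbs_eq_zero_of_not_compatAbs hz, zero_div]

/-- Theorem 2.2 (Rate separation for absorbing diffusion).  Under the noise-schedule
assumption at every `σ ∈ (0,1)`, for a masked coordinate `h` of a compatible state `x`
and a clean token `a`, the limit `L(σ)` of `q̄^h_{t−1|t}(a|x)/β^{(T)}_t` exists;
if the unmasking is support-improving then `|L(σ) − σ⁻¹ ρ| ≤ C` for small `σ`, and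
if it is non-improving then `L(σ) = 0` for every `σ ∈ (0,1)`. -/
theorem absorbing_rate_separation
    (K H : ℕ) (hK : 2 ≤ K) (hH : 1 ≤ H)
    (p : (Fin H → Fin K) → ℝ) (hp0 : ∀ v, 0 ≤ p v) (hp1 : ∑ v, p v = 1)
    (β : ℕ → ℕ → ℝ) (hβ : ∀ T, ∀ t ∈ Finset.Icc 1 T, β T t ∈ Set.Ioo (0 : ℝ) 1)
    (tsel : ℝ → ℕ → ℕ)
    (htsel : ∀ σ ∈ Set.Ioo (0 : ℝ) 1, ∀ T, 1 ≤ T → tsel σ T ∈ Finset.Icc 1 T ∧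
      ∀ s ∈ Finset.Icc 1 T, |cumNoise β T (tsel σ T) - σ| ≤ |cumNoise β T s - σ|)
    (hsched : ∀ σ ∈ Set.Ioo (0 : ℝ) 1,
      Tendsto (fun T => cumNoise β T (tsel σ T)) atTop (nhds σ) ∧
      Tendsto (fun T => β T (tsel σ T)) atTop (nhds 0))
    (x : Fin H → Option (Fin K)) (hx : CompatAbs K H p x)
    (h : Fin H) (hm : x h = none) (a : Fin K) :
    ∃ L : ℝ → ℝ,
      (∀ σ ∈ Set.Ioo (0 : ℝ) 1,
        Tendsto (fun T => revAbs K H p β T (tsel σ T) h a x / β T (tsel σ T))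
          atTop (nhds (L σ))) ∧
      (distSuppAbs K H p (Function.update x h (some a)) < distSuppAbs K H p x →
        ∃ C > (0 : ℝ), ∃ σ₀ ∈ Set.Ioo (0 : ℝ) 1, ∀ σ ∈ Set.Ioo (0 : ℝ) σ₀,
          |L σ - σ⁻¹ *
              (projMassAbs K H p (Function.update x h (some a)) / projMassAbs K H p x)|
            ≤ C) ∧
      (distSuppAbs K H p (Function.update x h (some a)) = distSuppAbs K H p x →
        ∀ σ ∈ Set.Ioo (0 : ℝ) 1, L σ = 0) := by
  exact absorbing_rate_separation_general hp0 (fun σ hσ => (eventually_ge_atTop 1).mono fun T hT =>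
    (hβ T _ (htsel σ hσ T hT).1).1.ne') hsched hx hm a
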